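/- arXiv:1104.1884 — 2 statements merged into one kernel-verified Lean document; each statement's English description precedes it below -/
import Mathlib

section
/- Let f : ℕ → (0,∞) be non-decreasing, let K > 0 satisfy f(x+y) ≤ K·f(x)·f(y) for all positive integers x, y, and extend f by setting f(0) := 1/K (so that f(x+y) ≤ K·f(x)·f(y) holds for all integers x, y ≥ 0). Let U^(1), ..., U^(m) be i.i.d. random variables taking values in {1, 2, 3, ...} and let A be a positive integer. Then E f(U^(1) + ... + U^(m)) ≤ f(A·m) · ( K · E f(U^(1)·𝟙{U^(1) > A}) )^m. -/
/-!
Summands are replaced by `A` one at a time. From `f 1 ≤ f 2 ≤ K f(1)²` we get `f 0 = 1/K ≤ f 1`, so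
`f` is monotone and submultiplicative up to `K` on all of `ℕ`. Hence, with `V = U·𝟙{U > A}`,
`f (k + U) ≤ f (k + A) · K f(V)` for every `k`: if `U ≤ A` the last factor is `K f(0) = 1`, and
otherwise `f (k + U) ≤ K f(k) f(U)`. Taking `k` to be the sum of the other variables,
`E f (k + U) ≤ E f (k + A) · K E f(V)`. The shifted function `f (· + A)` satisfies the same
pointwise bound, so the replacement can be repeated.
-/

open Filter
open scoped ENNReal

namespace MCPaper

/-- convolution of two probability mass functions on `ℕ`: the law of the sum of
independent random variables with laws `p` and `q`. -/
noncomputable def conv (p q : ℕ → ℝ≥0∞) (n : ℕ) : ℝ≥0∞ :=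
  ∑ k ∈ Finset.range (n + 1), p k * q (n - k)

/-- `convPow p m` is the `m`-fold convolution power of `p`: the law of the sum of `m`
i.i.d. random variables with law `p` (the Dirac mass at `0` for `m = 0`). -/
noncomputable def convPow (p : ℕ → ℝ≥0∞) : ℕ → ℕ → ℝ≥0∞
  | 0 => fun n => if n = 0 then 1 else 0
  | m + 1 => conv (convPow p m) p

section Antidiagonal

open Finset.HasAntidiagonal (antidiagonal mem_antidiagonal sigmaAntidiagonalEquivProd)

theorem conv_eq_sum_antidiagonal (p q : ℕ → ℝ≥0∞) (n : ℕ) :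
    conv p q n = ∑ x ∈ antidiagonal n, p x.1 * q x.2 :=
  (Finset.Nat.sum_antidiagonal_eq_sum_range_succ (fun i j => p i * q j) n).symm

theorem tsum_sum_antidiagonal {M : Type*} [AddMonoid M] [Finset.HasAntidiagonal M]
    (F : M × M → ℝ≥0∞) :
    ∑' n, ∑ x ∈ antidiagonal n, F x = ∑' (i : M) (j : M), F (i, j) := by
  calc ∑' n, ∑ x ∈ antidiagonal n, F x
      = ∑' (n : M) (x : antidiagonal n), F x :=
        tsum_congr fun n => (Finset.tsum_subtype (antidiagonal n) F).symm
    _ = ∑' x : Σ n : M, antidiagonal n, F x.2 :=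
        (ENNReal.tsum_sigma' fun x : Σ n : M, antidiagonal n => F x.2).symm
    _ = ∑' x : M × M, F x := sigmaAntidiagonalEquivProd.tsum_eq F
    _ = ∑' (i : M) (j : M), F (i, j) := ENNReal.tsum_prod'

theorem tsum_mul_conv (g p q : ℕ → ℝ≥0∞) :
    ∑' n, g n * conv p q n = ∑' (i : ℕ) (j : ℕ), g (i + j) * (p i * q j) := by
  rw [← tsum_sum_antidiagonal fun x => g (x.1 + x.2) * (p x.1 * q x.2)]
  refine tsum_congr fun n => ?_
  rw [conv_eq_sum_antidiagonal, Finset.mul_sum]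
  refine Finset.sum_congr rfl fun x hx => ?_
  rw [mem_antidiagonal.mp hx]

end Antidiagonal

theorem tsum_mul_convPow_zero (g u : ℕ → ℝ≥0∞) : ∑' n, g n * convPow u 0 n = g 0 := by
  simp [convPow]

theorem tsum_mul_conv_le {g h w : ℕ → ℝ≥0∞} (hg : ∀ k j, g (k + j) ≤ h k * w j)
    (p q : ℕ → ℝ≥0∞) :
    ∑' n, g n * conv p q n ≤ (∑' k, h k * p k) * ∑' j, w j * q j := by
  calc ∑' n, g n * conv p q n
      = ∑' (k : ℕ) (j : ℕ), g (k + j) * (p k * q j) := tsum_mul_conv g p q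
    _ ≤ ∑' (k : ℕ) (j : ℕ), h k * w j * (p k * q j) := by
        gcongr with k j
        exact hg k j
    _ = ∑' (k : ℕ) (j : ℕ), h k * p k * (w j * q j) := by
        simp only [mul_mul_mul_comm]
    _ = (∑' k, h k * p k) * ∑' j, w j * q j := by
        simp only [ENNReal.tsum_mul_left, ENNReal.tsum_mul_right]

theorem tsum_mul_convPow_le {g w : ℕ → ℝ≥0∞} {A : ℕ}
    (hg : ∀ k j, g (k + j) ≤ g (k + A) * w j) (u : ℕ → ℝ≥0∞) (m : ℕ) :
    ∑' n, g n * convPow u m n ≤ g (A * m) * (∑' j, w j * u j) ^ m := by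
  induction m generalizing g with
  | zero => simp [tsum_mul_convPow_zero]
  | succ m ih =>
    have hg_shift (k j : ℕ) : g (k + j + A) ≤ g (k + A + A) * w j := by
      simpa only [add_right_comm k j A] using hg (k + A) j
    calc ∑' n, g n * convPow u (m + 1) n
        ≤ (∑' k, g (k + A) * convPow u m k) * ∑' j, w j * u j := tsum_mul_conv_le hg _ u
      _ ≤ g (A * m + A) * (∑' j, w j * u j) ^ m * ∑' j, w j * u j := by
          gcongr
          exact ih hg_shift
      _ = g (A * (m + 1)) * (∑' j, w j * u j) ^ (m + 1) := by
          rw [mul_add_one, pow_succ, mul_assoc]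

section Submultiplicative

variable {g : ℕ → ℝ≥0∞} {K : ℝ≥0∞}

theorem apply_add_le_mul_apply_ite (hmono : Monotone g)
    (hsub : ∀ x y, g (x + y) ≤ K * g x * g y) (h0 : 1 ≤ K * g 0) (A k j : ℕ) :
    g (k + j) ≤ g (k + A) * (K * g (if A < j then j else 0)) := by
  split_ifs with hj
  · calc g (k + j) ≤ K * g k * g j := hsub k j
      _ = g k * (K * g j) := by ring
      _ ≤ g (k + A) * (K * g j) := by
          gcongr
          exact hmono (Nat.le_add_right k A)
  · calc g (k + j) ≤ g (k + A) := hmono (by lia)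
      _ ≤ g (k + A) * (K * g 0) := le_mul_of_one_le_right' h0

theorem tsum_mul_convPow_le_of_submultiplicative (hmono : Monotone g)
    (hsub : ∀ x y, g (x + y) ≤ K * g x * g y) (h0 : 1 ≤ K * g 0) (u : ℕ → ℝ≥0∞) (m A : ℕ) :
    ∑' n, g n * convPow u m n ≤
      g (A * m) * (K * ∑' n, g (if A < n then n else 0) * u n) ^ m := by
  simpa only [mul_assoc, ENNReal.tsum_mul_left] using
    tsum_mul_convPow_le (apply_add_le_mul_apply_ite hmono hsub h0 A) u m

end Submultiplicative

section ExtensionToZero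

theorem monotone_of_forall_pos {α : Type*} [Preorder α] {f : ℕ → α} (h01 : f 0 ≤ f 1)
    (hmono : ∀ m n : ℕ, 0 < m → m ≤ n → f m ≤ f n) : Monotone f :=
  monotone_nat_of_le_succ fun
    | 0 => h01
    | n + 1 => hmono (n + 1) (n + 2) n.succ_pos (Nat.le_succ _)

theorem submultiplicative_of_forall_pos {R : Type*} [CommSemiring R] [Preorder R] {f : ℕ → R}
    {K : R} (h0 : K * f 0 = 1) (hsub : ∀ x y : ℕ, 0 < x → 0 < y → f (x + y) ≤ K * f x * f y)
    (x y : ℕ) : f (x + y) ≤ K * f x * f y := by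
  rcases x.eq_zero_or_pos with rfl | hx
  · simp [h0]
  rcases y.eq_zero_or_pos with rfl | hy
  · simp [mul_right_comm K (f x), h0]
  exact hsub x y hx hy

end ExtensionToZero

theorem stmt_12_general (f : ℕ → ℝ) (K : ℝ) (hK : 0 < K)
    (hpos : ∀ n : ℕ, 0 < n → 0 < f n)
    (hmono : ∀ m n : ℕ, 0 < m → m ≤ n → f m ≤ f n)
    (hsub : ∀ x y : ℕ, 0 < x → 0 < y → f (x + y) ≤ K * f x * f y)
    (hf0 : f 0 = 1 / K) (u : ℕ → ℝ≥0∞) (m A : ℕ) :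
    (∑' n : ℕ, ENNReal.ofReal (f n) * convPow u m n) ≤
      ENNReal.ofReal (f (A * m)) *
        (ENNReal.ofReal K *
          ∑' n : ℕ, ENNReal.ofReal (f (if A < n then n else 0)) * u n) ^ m := by
  have hKf0 : K * f 0 = 1 := by rw [hf0, mul_one_div_cancel hK.ne']
  have hKf1 : 1 ≤ K * f 1 := (le_mul_iff_one_le_left (hpos 1 one_pos)).mp <|
    (hmono 1 2 one_pos one_le_two).trans (hsub 1 1 one_pos one_pos)
  have hf_mono : Monotone f :=
    monotone_of_forall_pos (le_of_mul_le_mul_left (hKf0.trans_le hKf1) hK) hmono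
  have hf_nonneg (n : ℕ) : 0 ≤ f n :=
    (hf0 ▸ (one_div_pos.mpr hK).le).trans (hf_mono n.zero_le)
  apply tsum_mul_convPow_le_of_submultiplicative (g := fun n => ENNReal.ofReal (f n))
  · exact ENNReal.ofReal_mono.comp hf_mono
  · intro x y
    rw [← ENNReal.ofReal_mul hK.le, ← ENNReal.ofReal_mul (mul_nonneg hK.le (hf_nonneg x))]
    exact ENNReal.ofReal_le_ofReal (submultiplicative_of_forall_pos hKf0 hsub x y)
  · rw [← ENNReal.ofReal_mul hK.le, hKf0, ENNReal.ofReal_one]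

theorem stmt_12 (f : ℕ → ℝ) (K : ℝ) (hK : 0 < K)
    (hpos : ∀ n : ℕ, 0 < n → 0 < f n)
    (hmono : ∀ m n : ℕ, 0 < m → m ≤ n → f m ≤ f n)
    (hsub : ∀ x y : ℕ, 0 < x → 0 < y → f (x + y) ≤ K * f x * f y)
    (hf0 : f 0 = 1 / K)
    (u : ℕ → ℝ≥0∞) (hu0 : u 0 = 0) (husum : ∑' n : ℕ, u n = 1)
    (m A : ℕ) (hA : 0 < A) :
    (∑' n : ℕ, ENNReal.ofReal (f n) * convPow u m n) ≤
      ENNReal.ofReal (f (A * m)) *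
        (ENNReal.ofReal K *
          ∑' n : ℕ, ENNReal.ofReal (f (if A < n then n else 0)) * u n) ^ m :=
  stmt_12_general f K hK hpos hmono hsub hf0 u m A

end MCPaper
end

section
/- Let f : ℕ → (0,∞) be non-decreasing with f(n) → ∞, and suppose limsup_{n→∞} (1/n)·log f(n) > 0. Then f does not belong to the class G: there exists p ∈ (0,1) such that for the irreducible recurrent Markov chain on the two states {0, 1} with transition probabilities p_{01} = p, p_{00} = 1 - p, p_{10} = 1, one has E f(T_00) < ∞ while E f(T_11) = ∞. -/
open Filter
open scoped ENNReal

namespace MCPaper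

variable {E : Type*}

open Classical in
/-- `hitAvoid P t a n x` is the probability that the chain with transition matrix `P`,
started at `x`, is at `t` at time `n` while avoiding both `t` and `a` at times `1,…,n-1`.
For `t = a` this is the distribution of the first hitting time of `t`. -/
noncomputable def hitAvoid (P : E → E → ℝ≥0∞) (t a : E) : ℕ → E → ℝ≥0∞
  | 0, _ => 0
  | 1, x => P x t
  | n + 2, x => ∑' k : E, if k = t ∨ k = a then 0 else P x k * hitAvoid P t a (n + 1) k

/-- `firstHit P i j n = P_i(T_ij = n)`, the probability that the first hitting time of `j`
(first return time if `i = j`) starting from `i` equals `n`. -/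
noncomputable def firstHit (P : E → E → ℝ≥0∞) (i j : E) (n : ℕ) : ℝ≥0∞ :=
  hitAvoid P j j n i

/-- `P` is a stochastic matrix. -/
def IsStochastic (P : E → E → ℝ≥0∞) : Prop := ∀ i, ∑' j : E, P i j = 1

/-- irreducibility: any state can be reached from any other state. -/
def IsIrreducible (P : E → E → ℝ≥0∞) : Prop := ∀ i j : E, ∃ n : ℕ, 0 < firstHit P i j n

/-- recurrence: `P_i(T_ii < ∞) = 1` for every state `i`. -/
def IsRecurrent (P : E → E → ℝ≥0∞) : Prop := ∀ i : E, ∑' n : ℕ, firstHit P i i n = 1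

/-- the generalized moment `E f(T_ij)` of the first hitting time of `j` from `i`. -/
noncomputable def momGen (f : ℕ → ℝ) (P : E → E → ℝ≥0∞) (i j : E) : ℝ≥0∞ :=
  ∑' n : ℕ, ENNReal.ofReal (f n) * firstHit P i j n

/-- the class `𝒢`: a finite generalized `f`-moment of the return time of one state implies
finiteness for the return times of all states, for every irreducible recurrent chain. -/
def MemG (f : ℕ → ℝ) : Prop :=
  ∀ (S : Type) [Countable S] (P : S → S → ℝ≥0∞),
    IsStochastic P → IsIrreducible P → IsRecurrent P →
      ∀ i : S, momGen f P i i < ⊤ → ∀ j : S, momGen f P j j < ⊤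

/-- the class `ℋ`: finiteness of `E f(T_ij)` and `E f(T_ji)` for a pair of states implies
finiteness of `E f(T_kl)` for all pairs, for every irreducible recurrent chain. -/
def MemH (f : ℕ → ℝ) : Prop :=
  ∀ (S : Type) [Countable S] (P : S → S → ℝ≥0∞),
    IsStochastic P → IsIrreducible P → IsRecurrent P →
      ∀ i j : S, momGen f P i j < ⊤ → momGen f P j i < ⊤ →
        ∀ k l : S, momGen f P k l < ⊤

/-!
Let the chain leave `0` with probability `p` and always return from `1` to `0`. The return time of
`0` is at most `2`, so `E f(T_00)` is finite, whereas `T_11 - 1` is a geometric variable: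
`P_1(T_11 = n + 2) = (1 - p) ^ n * p`. A positive limsup of `log f(n) / n` means that `f` beats
some exponential `(1 - p) ^ (-n)` for infinitely many `n`; for this `p`, infinitely many terms of
the series `E f(T_11)` are at least `p`.
-/

section FirstHit

variable {P : E → E → ℝ≥0∞} {f : ℕ → ℝ} {i j : E}

@[simp] lemma firstHit_zero : firstHit P i j 0 = 0 := rfl

@[simp] lemma firstHit_one : firstHit P i j 1 = P i j := rfl

open Classical in
lemma firstHit_add_two (n : ℕ) :
    firstHit P i j (n + 2) = ∑' k, if k = j then 0 else P i k * firstHit P k j (n + 1) := by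
  simp only [firstHit, hitAvoid, or_self]

lemma momGen_lt_top_of_firstHit_eq_zero {N : ℕ} (hne : ∀ n, firstHit P i j n ≠ ⊤)
    (hzero : ∀ n, N ≤ n → firstHit P i j n = 0) : momGen f P i j < ⊤ := by
  rw [momGen, tsum_eq_sum (s := Finset.range N)]
  · exact ENNReal.sum_lt_top.mpr fun n _ =>
      ENNReal.mul_lt_top ENNReal.ofReal_lt_top (hne n).lt_top
  · intro n hn
    rw [hzero n (by simpa using hn), mul_zero]

lemma momGen_eq_top_of_frequently_le {a : ℝ≥0∞} (ha : a ≠ 0)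
    (hf : ∃ᶠ n in atTop, a ≤ ENNReal.ofReal (f n) * firstHit P i j n) : momGen f P i j = ⊤ := by
  by_contra hne
  exact Nat.frequently_atTop_iff_infinite.mp hf (ENNReal.finite_const_le_of_tsum_ne_top hne ha)

lemma IsStochastic.le_one (hP : IsStochastic P) (i j : E) : P i j ≤ 1 :=
  (ENNReal.le_tsum j).trans_eq (hP i)

lemma IsStochastic.ne_top (hP : IsStochastic P) (i j : E) : P i j ≠ ⊤ :=
  ne_top_of_le_ne_top ENNReal.one_ne_top (hP.le_one i j)

end FirstHit

section TwoStates

variable {P : Fin 2 → Fin 2 → ℝ≥0∞} {f : ℕ → ℝ} {i j k : Fin 2}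

lemma firstHit_fin_two_add_two (hkj : k ≠ j) (n : ℕ) :
    firstHit P i j (n + 2) = P i k * firstHit P k j (n + 1) := by
  classical
  rw [firstHit_add_two, tsum_eq_single k, if_neg hkj]
  exact fun l hl => if_pos (by omega)

lemma firstHit_fin_two_of_ne (hkj : k ≠ j) (n : ℕ) :
    firstHit P k j (n + 1) = P k k ^ n * P k j := by
  induction n with
  | zero => simp
  | succ n ih => rw [firstHit_fin_two_add_two hkj, ih, pow_succ', mul_assoc]

lemma firstHit_fin_two (hkj : k ≠ j) (n : ℕ) :
    firstHit P i j (n + 2) = P i k * (P k k ^ n * P k j) := by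
  rw [firstHit_fin_two_add_two hkj, firstHit_fin_two_of_ne hkj]

lemma isStochastic_fin_two_iff (hkj : k ≠ j) : IsStochastic P ↔ ∀ i, P i j + P i k = 1 := by
  have hsum (i : Fin 2) : ∑' l, P i l = P i j + P i k := by
    rw [tsum_fintype, ← Fintype.sum_eq_add j k hkj.symm fun l hl => absurd hl (by omega)]
  simp only [IsStochastic, hsum]

lemma IsStochastic.tsum_firstHit_fin_two (hP : IsStochastic P) (hkj : k ≠ j) (hk : P k j ≠ 0)
    (i : Fin 2) : ∑' n, firstHit P i j n = 1 := by
  have hrow := (isStochastic_fin_two_iff hkj).mp hP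
  have hleave : 1 - P k k = P k j :=
    ENNReal.sub_eq_of_eq_add (hP.ne_top k k) (hrow k).symm
  calc ∑' n, firstHit P i j n
      = P i j + ∑' n, P i k * (P k k ^ n * P k j) := by
        rw [← ENNReal.summable.sum_add_tsum_nat_add' (k := 2)]
        simp [Finset.sum_range_succ, firstHit_fin_two hkj]
    _ = P i j + P i k * ((P k j)⁻¹ * P k j) := by
        rw [ENNReal.tsum_mul_left, ENNReal.tsum_mul_right, ENNReal.tsum_geometric, hleave]
    _ = 1 := by
        rw [ENNReal.inv_mul_cancel hk (hP.ne_top k j), mul_one, hrow]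

lemma IsStochastic.isIrreducible_fin_two (hP : IsStochastic P)
    (hoff : Pairwise fun k j => P k j ≠ 0) : IsIrreducible P := by
  intro i j
  obtain ⟨k, hkj⟩ := exists_ne j
  by_contra! hzero
  simpa [fun n => nonpos_iff_eq_zero.mp (hzero n)] using
    hP.tsum_firstHit_fin_two hkj (hoff hkj) i

lemma IsStochastic.isRecurrent_fin_two (hP : IsStochastic P)
    (hoff : Pairwise fun k j => P k j ≠ 0) : IsRecurrent P := fun j =>
  let ⟨_, hkj⟩ := exists_ne j
  hP.tsum_firstHit_fin_two hkj (hoff hkj) j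

lemma IsStochastic.momGen_fin_two_lt_top (hP : IsStochastic P) (hkj : k ≠ j) (hk : P k k = 0) :
    momGen f P i j < ⊤ := by
  have hk1 : P k j = 1 := by simpa [hk] using (isStochastic_fin_two_iff hkj).mp hP k
  have hsum := hP.tsum_firstHit_fin_two hkj (hk1 ▸ one_ne_zero) i
  refine momGen_lt_top_of_firstHit_eq_zero (N := 3)
    (ENNReal.ne_top_of_tsum_ne_top (hsum ▸ ENNReal.one_ne_top)) fun n hn => ?_
  obtain ⟨m, rfl⟩ := Nat.exists_eq_add_of_le' hn
  rw [firstHit_fin_two hkj (m + 1), hk, zero_pow m.succ_ne_zero, zero_mul, mul_zero]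

lemma IsStochastic.momGen_fin_two_eq_top (hP : IsStochastic P) (hkj : k ≠ j) (hik : P i k ≠ 0)
    (hk : P k j ≠ 0) (hf : ∃ᶠ n in atTop, 1 ≤ ENNReal.ofReal (f n) * P k k ^ n) :
    momGen f P i j = ⊤ := by
  refine momGen_eq_top_of_frequently_le (mul_ne_zero hik hk)
    ((hf.and_eventually (eventually_ge_atTop 2)).mono fun n ⟨hfn, hn⟩ => ?_)
  obtain ⟨m, rfl⟩ := Nat.exists_eq_add_of_le' hn
  have hm : 1 ≤ ENNReal.ofReal (f (m + 2)) * P k k ^ m :=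
    hfn.trans (mul_le_mul_right (pow_le_pow_right_of_le_one' (hP.le_one k k) (m.le_add_right 2)) _)
  calc P i k * P k j
      ≤ ENNReal.ofReal (f (m + 2)) * P k k ^ m * (P i k * P k j) := le_mul_of_one_le_left' hm
    _ = ENNReal.ofReal (f (m + 2)) * firstHit P i j (m + 2) := by
        rw [firstHit_fin_two hkj]; ring

end TwoStates

/-- The transition matrix of the two-state chain that moves from `0` to `1` with probability `q`,
stays at `0` with probability `1 - q`, and always returns from `1` to `0`. It is a stochastic
matrix only for `q ≤ 1`, because the subtraction is truncated. -/
noncomputable def twoState (q : ℝ≥0∞) : Fin 2 → Fin 2 → ℝ≥0∞ := fun a b =>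
  if a = 0 then (if b = 0 then 1 - q else q) else (if b = 0 then 1 else 0)

namespace twoState

variable {q : ℝ≥0∞}

lemma isStochastic (hq : q ≤ 1) : IsStochastic (twoState q) := by
  simp [isStochastic_fin_two_iff one_ne_zero, Fin.forall_fin_two, twoState,
    tsub_add_cancel_of_le hq]

lemma pairwise_ne_zero (hq : q ≠ 0) : Pairwise fun a b => twoState q a b ≠ 0 := by
  simp [Pairwise, Fin.forall_fin_two, twoState, hq]

lemma momGen_one_one_eq_top {f : ℕ → ℝ} {p : ℝ} (hp0 : 0 < p) (hp1 : p < 1)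
    (hf : ∃ᶠ n in atTop, 1 ≤ f n * (1 - p) ^ n) :
    momGen f (twoState (ENNReal.ofReal p)) 1 1 = ⊤ := by
  have hq : ENNReal.ofReal p ≠ 0 := (ENNReal.ofReal_pos.mpr hp0).ne'
  have hstay : twoState (ENNReal.ofReal p) 0 0 = ENNReal.ofReal (1 - p) := by
    simp [twoState, ENNReal.ofReal_sub 1 hp0.le]
  have hp : 0 ≤ 1 - p := by linarith
  refine (isStochastic (ENNReal.ofReal_le_one.mpr hp1.le)).momGen_fin_two_eq_top zero_ne_one
    (pairwise_ne_zero hq one_ne_zero) (pairwise_ne_zero hq zero_ne_one) (hf.mono fun n hn => ?_)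
  rwa [hstay, ← ENNReal.ofReal_pow hp, ← ENNReal.ofReal_mul' (pow_nonneg hp n),
    ENNReal.one_le_ofReal]

end twoState

lemma exists_frequently_one_le_mul_pow {f : ℕ → ℝ} (hpos : ∀ n, 0 < f n)
    (hlog : 0 < limsup (fun n : ℕ => ((Real.log (f n) / n : ℝ) : EReal)) atTop) :
    ∃ r : ℝ, 0 < r ∧ r < 1 ∧ ∃ᶠ n in atTop, 1 ≤ f n * r ^ n := by
  obtain ⟨c, hc0, hc⟩ := EReal.lt_iff_exists_real_btwn.mp hlog
  have hr : Real.exp (-c) < 1 := Real.exp_lt_one_iff.mpr (neg_lt_zero.mpr (mod_cast hc0))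
  refine ⟨Real.exp (-c), Real.exp_pos _, hr, ?_⟩
  refine ((frequently_lt_of_lt_limsup (by isBoundedDefault) hc).and_eventually
    (eventually_gt_atTop 0)).mono fun n ⟨hn, hn0⟩ => ?_
  have hlogn : c * n < Real.log (f n) :=
    (lt_div_iff₀ (by exact_mod_cast hn0)).mp (EReal.coe_lt_coe_iff.mp hn)
  calc 1 ≤ Real.exp (Real.log (f n) + n * -c) := Real.one_le_exp (by linarith)
    _ = f n * Real.exp (-c) ^ n := by
        rw [Real.exp_add, Real.exp_log (hpos n), Real.exp_nat_mul]

theorem stmt_18_general (f : ℕ → ℝ) (hpos : ∀ n, 0 < f n)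
    (hlog : 0 < limsup (fun n : ℕ => ((Real.log (f n) / n : ℝ) : EReal)) atTop) :
    ¬ MemG f ∧
      ∃ p : ℝ, 0 < p ∧ p < 1 ∧
        IsStochastic (twoState (ENNReal.ofReal p)) ∧
        IsIrreducible (twoState (ENNReal.ofReal p)) ∧
        IsRecurrent (twoState (ENNReal.ofReal p)) ∧
        momGen f (twoState (ENNReal.ofReal p)) 0 0 < ⊤ ∧
        momGen f (twoState (ENNReal.ofReal p)) 1 1 = ⊤ := by
  obtain ⟨r, hr0, hr1, hf⟩ := exists_frequently_one_le_mul_pow hpos hlog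
  have hp0 : 0 < 1 - r := sub_pos.mpr hr1
  have hp1 : 1 - r < 1 := sub_lt_self 1 hr0
  have hoff := twoState.pairwise_ne_zero (ENNReal.ofReal_pos.mpr hp0).ne'
  have hsto := twoState.isStochastic (ENNReal.ofReal_le_one.mpr hp1.le)
  have hirr := hsto.isIrreducible_fin_two hoff
  have hrec := hsto.isRecurrent_fin_two hoff
  have hfin := hsto.momGen_fin_two_lt_top (f := f) (i := 0) one_ne_zero rfl
  have hinf := twoState.momGen_one_one_eq_top hp0 hp1 (f := f) (by simpa using hf)
  exact ⟨fun hG => (hG (Fin 2) _ hsto hirr hrec 0 hfin 1).ne hinf,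
    1 - r, hp0, hp1, hsto, hirr, hrec, hfin, hinf⟩

theorem stmt_18 (f : ℕ → ℝ) (hpos : ∀ n, 0 < f n) (hmono : Monotone f)
    (htop : Tendsto f atTop atTop)
    (hlog : 0 < limsup (fun n : ℕ => ((Real.log (f n) / n : ℝ) : EReal)) atTop) :
    ¬ MemG f ∧
      ∃ p : ℝ, 0 < p ∧ p < 1 ∧
        IsStochastic (fun a b : Fin 2 =>
        if a = 0 then (if b = 0 then 1 - ENNReal.ofReal p else ENNReal.ofReal p)
        else (if b = 0 then 1 else 0)) ∧
        IsIrreducible (fun a b : Fin 2 =>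
        if a = 0 then (if b = 0 then 1 - ENNReal.ofReal p else ENNReal.ofReal p)
        else (if b = 0 then 1 else 0)) ∧
        IsRecurrent (fun a b : Fin 2 =>
        if a = 0 then (if b = 0 then 1 - ENNReal.ofReal p else ENNReal.ofReal p)
        else (if b = 0 then 1 else 0)) ∧
        momGen f (fun a b : Fin 2 =>
        if a = 0 then (if b = 0 then 1 - ENNReal.ofReal p else ENNReal.ofReal p)
        else (if b = 0 then 1 else 0)) 0 0 < ⊤ ∧
        momGen f (fun a b : Fin 2 =>
        if a = 0 then (if b = 0 then 1 - ENNReal.ofReal p else ENNReal.ofReal p)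
        else (if b = 0 then 1 else 0)) 1 1 = ⊤ :=
  stmt_18_general f hpos hlog

end MCPaper
end
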